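/- For all z ∈ ℂ and generic tuples ū (length n), v̄ (length m), the modified Izergin determinant has the partition expansion K^{(z)}_{n,m}(ū | v̄) = Σ_{v̄ ⇒ {v̄_I, v̄_II}} (−z)^{#v̄_II} f(ū, v̄_I) f(v̄_I, v̄_II), and the conjugated one satisfies \bar{K}^{(z)}_{n,m}(ū | v̄) = Σ_{v̄ ⇒ {v̄_I, v̄_II}} (−z)^{#v̄_II} f(v̄_I, ū) f(v̄_II, v̄_I), where the sums run over all partitions of v̄ into two disjoint subtuples. -/

import Mathlib

open scoped BigOperators

noncomputable section

/-- The rational function `g(u,v) = c/(u-v)`. -/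
def gC (c u v : ℂ) : ℂ := c / (u - v)

/-- The rational function `f(u,v) = (u-v+c)/(u-v)`. -/
def fC (c u v : ℂ) : ℂ := (u - v + c) / (u - v)

/-- The rational function `h(u,v) = (u-v+c)/c`. -/
def hC (c u v : ℂ) : ℂ := (u - v + c) / c

/-- A family of parameters is generic if all pairwise differences avoid `0, ±c, ±2c`. -/
def Generic (c : ℂ) {ι : Type*} (w : ι → ℂ) : Prop :=
  ∀ i j, i ≠ j → w i - w j ≠ 0 ∧ w i - w j ≠ c ∧ w i - w j ≠ -c ∧
    w i - w j ≠ 2 * c ∧ w i - w j ≠ -2 * c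

/-- The modified Izergin determinant `K^{(z)}(x̄|ȳ)`. -/
def KIz (c z : ℂ) {ι κ : Type*} [Fintype ι] [Fintype κ] [DecidableEq κ]
    (x : ι → ℂ) (y : κ → ℂ) : ℂ :=
  Matrix.det (Matrix.of fun j k : κ =>
    -z * (if j = k then 1 else 0) +
      (∏ i, fC c (x i) (y j)) * (∏ i ∈ Finset.univ.erase j, fC c (y j) (y i))
        / hC c (y j) (y k))

/-- The conjugated modified Izergin determinant: `c` is replaced by `-c`. -/
def KIzBar (c z : ℂ) {ι κ : Type*} [Fintype ι] [Fintype κ] [DecidableEq κ]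
    (x : ι → ℂ) (y : κ → ℂ) : ℂ :=
  KIz (-c) z x y

/-- Restriction of a tuple to a subtuple indexed by a `Finset`. -/
def restr {p : ℕ} (w : Fin p → ℂ) (s : Finset (Fin p)) : {x // x ∈ s} → ℂ :=
  fun i => w i.1

/-- Double product `f(w̄_s, w̄_t)` over two subtuples of a tuple. -/
def fSS (c : ℂ) {p : ℕ} (w : Fin p → ℂ) (s t : Finset (Fin p)) : ℂ :=
  ∏ i ∈ s, ∏ j ∈ t, fC c (w i) (w j)

/-!
Expanding `det (-z + A)` multilinearly in its rows turns it into a sum over subsets `s` of the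
indices, `-z` to the power `#sᶜ` times the principal minor of `A` on `s`. In the Izergin matrix
the row factors `f(ū, v_j) f(v_j, v̄_j)` come out of the minor and leave a Cauchy determinant with
value `∏_{i ≠ j} 1 / f(v_i, v_j)` over `i, j ∈ s`, which cancels all of `f(v_j, v̄_j)` except the
factors with second argument outside `s`. The conjugated expansion is the same one for `-c`, since
`f(a, b)` becomes `f(b, a)` under `c ↦ -c`.
-/

theorem det_diagonal_add_eq_sum_minors {R κ : Type*} [CommRing R] [Fintype κ] [DecidableEq κ]
    (d : κ → R) (A : Matrix κ κ R) :
    (Matrix.diagonal d + A).det =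
      ∑ s : Finset κ, (∏ i ∈ sᶜ, d i) * (A.submatrix ((↑) : s → κ) (↑)).det := by
  have expand_rows := (Matrix.detRowAlternating (n := κ) (R := R)).map_add_univ
    A.row (Matrix.diagonal d).row
  have pull_diagonal (s : Finset κ) :=
    (Matrix.detRowAlternating (n := κ) (R := R)).map_piecewise_smul
      d (s.piecewise A.row (1 : Matrix κ κ R).row) sᶜ
  rw [add_comm]
  refine expand_rows.trans (Finset.sum_congr rfl fun s _ => ?_)
  rw [← Matrix.det_piecewise_one_eq_submatrix_det]
  refine Eq.trans (congrArg _ ?_) (pull_diagonal s)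
  ext i j
  by_cases hi : i ∈ s <;> simp [hi, Finset.piecewise, Matrix.row, Matrix.diagonal, Matrix.one_apply]

section Cauchy

variable {K : Type*} [Field K]

theorem det_cauchy_succ {n : ℕ} {x y : Fin (n + 1) → K} (hxy : ∀ i j, x i - y j ≠ 0) :
    (Matrix.of fun i j => (x i - y j)⁻¹).det =
      (x 0 - y 0)⁻¹ *
        ((∏ i : Fin n, (x i.succ - x 0) / (x i.succ - y 0)) *
          (Matrix.of fun i j : Fin n => (x i.succ - y j.succ)⁻¹).det *
            ∏ j : Fin n, (y 0 - y j.succ) / (x 0 - y j.succ)) := by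
  -- Row `0`, scaled to cancel the entries below `(0, 0)`, is subtracted from the other rows.
  let B : Matrix (Fin (n + 1)) (Fin (n + 1)) K := Matrix.of fun i j =>
    (x i - y j)⁻¹ - if i = 0 then 0 else (x 0 - y 0) / (x i - y 0) * (x 0 - y j)⁻¹
  have det_eq : (Matrix.of fun i j => (x i - y j)⁻¹).det = B.det := by
    refine Matrix.det_eq_of_forall_row_eq_smul_add_const
      (fun i => if i = 0 then 0 else (x 0 - y 0) / (x i - y 0)) 0 (if_pos rfl) fun i j => ?_
    by_cases hi : i = 0 <;> simp [B, hi]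
  have B_succ_zero (i : Fin n) : B i.succ 0 = 0 := by
    have := hxy 0 0
    have := hxy i.succ 0
    simp only [B, Matrix.of_apply, Fin.succ_ne_zero, if_false]
    field_simp
    ring
  have B_succ_succ : B.submatrix Fin.succ Fin.succ =
      Matrix.diagonal (fun i : Fin n => (x i.succ - x 0) / (x i.succ - y 0)) *
        (Matrix.of fun i j : Fin n => (x i.succ - y j.succ)⁻¹) *
          Matrix.diagonal fun j : Fin n => (y 0 - y j.succ) / (x 0 - y j.succ) := by
    ext i j
    have := hxy i.succ j.succ
    have := hxy i.succ 0
    have := hxy 0 j.succ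
    simp only [B, Matrix.submatrix_apply, Matrix.of_apply, Fin.succ_ne_zero, if_false,
      Matrix.mul_diagonal, Matrix.diagonal_mul]
    field_simp
    ring
  have B_zero_zero : B 0 0 = (x 0 - y 0)⁻¹ := by simp [B]
  rw [det_eq, Matrix.det_succ_column_zero, Fin.sum_univ_succ]
  simp only [B_succ_zero, B_zero_zero, Fin.succAbove_zero, B_succ_succ, Matrix.det_mul,
    Matrix.det_diagonal, Fin.val_zero, pow_zero, one_mul, mul_zero, zero_mul,
    Finset.sum_const_zero, add_zero]

theorem det_cauchy : ∀ {n : ℕ} {x y : Fin n → K}, (∀ i j, x i - y j ≠ 0) →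
    (Matrix.of fun i j => (x i - y j)⁻¹).det =
      (∏ i, ∏ j ∈ Finset.Ioi i, (x j - x i) * (y i - y j)) / ∏ i, ∏ j, (x i - y j)
  | 0, _, _, _ => by simp
  | n + 1, x, y, hxy => by
    rw [det_cauchy_succ hxy, det_cauchy fun i j => hxy i.succ j.succ]
    simp only [Fin.prod_univ_succ (n := n), Fin.prod_Ioi_zero, Fin.prod_Ioi_succ,
      Finset.prod_div_distrib, Finset.prod_mul_distrib]
    field_simp

theorem det_shifted_cauchy_fin {n : ℕ} {c : K} {w : Fin n → K}
    (hw : ∀ i j, w i - w j + c ≠ 0) :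
    (Matrix.of fun i j => c / (w i - w j + c)).det =
      ∏ i, ∏ j ∈ {i}ᶜ, (w i - w j) / (w i - w j + c) := by
  have denominator (i : Fin n) :
      ∏ j, (w i - (w j - c)) = c * ∏ j ∈ {i}ᶜ, (w i - w j + c) := by
    rw [Fintype.prod_eq_mul_prod_compl i]
    simp [sub_add]
  calc (Matrix.of fun i j => c / (w i - w j + c)).det
      = (∏ _i : Fin n, c) * (Matrix.of fun i j => (w i - (w j - c))⁻¹).det := by
        rw [← Matrix.det_mul_column]
        simp only [Matrix.of_apply, div_eq_mul_inv, sub_add]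
    _ = (∏ _i : Fin n, c) * ((∏ i, ∏ j ∈ {i}ᶜ, (w i - w j)) / ∏ i, ∏ j, (w i - (w j - c))) := by
        rw [det_cauchy fun i j => by simpa only [sub_add] using hw i j,
          ← Finset.prod_prod_Ioi_mul_eq_prod_prod_off_diag fun j i => w i - w j]
        simp only [sub_sub_sub_cancel_right, mul_comm]
    _ = ∏ i, ∏ j ∈ {i}ᶜ, (w i - w j) / (w i - w j + c) := by
        simp only [denominator, ← Finset.prod_div_distrib, ← Finset.prod_mul_distrib]
        refine Finset.prod_congr rfl fun i _ => ?_
        have hc : c ≠ 0 := by simpa using hw i i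
        rw [Finset.prod_div_distrib, ← mul_div_assoc, mul_div_mul_left _ _ hc]

theorem det_shifted_cauchy {κ : Type*} [Fintype κ] [DecidableEq κ] {c : K} {w : κ → K}
    (hw : ∀ i j, w i - w j + c ≠ 0) :
    (Matrix.of fun i j => c / (w i - w j + c)).det =
      ∏ i, ∏ j ∈ {i}ᶜ, (w i - w j) / (w i - w j + c) := by
  let e := (Fintype.equivFin κ).symm
  rw [← Matrix.det_submatrix_equiv_self e]
  refine (det_shifted_cauchy_fin (w := w ∘ e) fun i j => hw (e i) (e j)).trans ?_
  exact Fintype.prod_equiv e _ _ fun i => Finset.prod_equiv e (by simp) (by simp)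

end Cauchy

theorem Generic.comp_injective {ι κ : Type*} {c : ℂ} {w : ι → ℂ} (hw : Generic c w) {e : κ → ι}
    (he : Function.Injective e) : Generic c (w ∘ e) :=
  fun _ _ hij => hw _ _ (he.ne hij)

theorem Generic.injective {ι : Type*} {c : ℂ} {w : ι → ℂ} (hw : Generic c w) :
    Function.Injective w :=
  fun i j h => by_contra fun hij => (hw i j hij).1 (sub_eq_zero.2 h)

theorem Generic.sub_add_ne_zero {ι : Type*} {c : ℂ} {w : ι → ℂ} (hw : Generic c w) (hc : c ≠ 0)
    (i j : ι) : w i - w j + c ≠ 0 := by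
  obtain rfl | hij := eq_or_ne i j
  · simpa using hc
  · exact fun h => (hw i j hij).2.2.1 (eq_neg_of_add_eq_zero_left h)

theorem fC_neg (c a b : ℂ) : fC (-c) a b = fC c b a := by
  rw [fC, fC, ← neg_div_neg_eq]
  ring_nf

theorem prod_univ_erase_mul_prod_erase_inv {M κ : Type*} [CommGroupWithZero M] [Fintype κ]
    [DecidableEq κ] {F : κ → M} {s : Finset κ} {i : κ} (hi : i ∈ s)
    (hF : ∀ j ∈ s.erase i, F j ≠ 0) :
    (∏ j ∈ Finset.univ.erase i, F j) * ∏ j ∈ s.erase i, (F j)⁻¹ = ∏ j ∈ sᶜ, F j := by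
  have hs : Finset.univ.erase i \ s.erase i = sᶜ := by
    ext j
    by_cases h : j = i <;> simp [h, hi]
  rw [← hs, ← Finset.prod_sdiff (Finset.erase_subset_erase i s.subset_univ), mul_assoc,
    ← Finset.prod_mul_distrib, Finset.prod_eq_one fun j hj => mul_inv_cancel₀ (hF j hj), mul_one]

section Izergin

variable {κ : Type*} [DecidableEq κ] {c : ℂ} {v : κ → ℂ}

theorem det_inv_hC (hv : ∀ i j, v i - v j + c ≠ 0) (s : Finset κ) :
    (Matrix.of fun i j : s => (hC c (v i) (v j))⁻¹).det =
      ∏ i ∈ s, ∏ j ∈ s.erase i, (fC c (v i) (v j))⁻¹ := by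
  simp only [hC, fC, inv_div]
  rw [det_shifted_cauchy (w := fun i : s => v i) fun i j => hv i j, ← Finset.prod_coe_sort s]
  refine Finset.prod_congr rfl fun i _ => ?_
  refine Finset.prod_nbij Subtype.val ?_ Subtype.val_injective.injOn ?_ fun _ _ => rfl
  · intro j hj
    exact Finset.mem_erase.2 ⟨Subtype.coe_ne_coe.2 (by simpa using hj), j.2⟩
  · intro j hj
    obtain ⟨hji, hjs⟩ := Finset.mem_erase.1 hj
    exact ⟨⟨j, hjs⟩, by simpa [Subtype.ext_iff] using hji, rfl⟩

variable {ι : Type*} [Fintype ι] [Fintype κ]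

theorem KIz_eq_sum (hinj : Function.Injective v) (hv : ∀ i j, v i - v j + c ≠ 0) (z : ℂ)
    (u : ι → ℂ) :
    KIz c z u v =
      ∑ s : Finset κ, (-z) ^ sᶜ.card * (∏ i, ∏ j ∈ s, fC c (u i) (v j)) *
        ∏ i ∈ s, ∏ j ∈ sᶜ, fC c (v i) (v j) := by
  have fC_ne_zero {i j : κ} (hij : i ≠ j) : fC c (v i) (v j) ≠ 0 :=
    div_ne_zero (hv i j) (sub_ne_zero.2 (hinj.ne hij))
  let rowFactor (j : κ) : ℂ :=
    (∏ i, fC c (u i) (v j)) * ∏ i ∈ Finset.univ.erase j, fC c (v j) (v i)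
  let A : Matrix κ κ ℂ := Matrix.of fun j k => rowFactor j / hC c (v j) (v k)
  have minor (s : Finset κ) : (A.submatrix ((↑) : s → κ) (↑)).det =
      (∏ i, ∏ j ∈ s, fC c (u i) (v j)) * ∏ i ∈ s, ∏ j ∈ sᶜ, fC c (v i) (v j) :=
    calc (A.submatrix ((↑) : s → κ) (↑)).det
        = (∏ j : s, rowFactor j) * (Matrix.of fun j k : s => (hC c (v j) (v k))⁻¹).det :=
          Matrix.det_mul_column _ _
      _ = ∏ j ∈ s, rowFactor j * ∏ k ∈ s.erase j, (fC c (v j) (v k))⁻¹ := by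
          rw [det_inv_hC hv, Finset.prod_coe_sort s rowFactor, ← Finset.prod_mul_distrib]
      _ = ∏ j ∈ s, (∏ i, fC c (u i) (v j)) * ∏ k ∈ sᶜ, fC c (v j) (v k) :=
          Finset.prod_congr rfl fun j hj => by
            rw [mul_assoc, prod_univ_erase_mul_prod_erase_inv hj fun k hk =>
              fC_ne_zero (Finset.ne_of_mem_erase hk).symm]
      _ = _ := by rw [Finset.prod_mul_distrib, Finset.prod_comm]
  have KIz_eq : KIz c z u v = (Matrix.diagonal (fun _ => -z) + A).det := by
    unfold KIz
    congr 1
    ext j k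
    simp [A, rowFactor, Matrix.diagonal_apply]
  rw [KIz_eq, det_diagonal_add_eq_sum_minors]
  simp only [minor, Finset.prod_const, mul_assoc]

theorem KIzBar_eq_sum (hinj : Function.Injective v) (hv : ∀ i j, v i - v j + c ≠ 0) (z : ℂ)
    (u : ι → ℂ) :
    KIzBar c z u v =
      ∑ s : Finset κ, (-z) ^ sᶜ.card * (∏ j ∈ s, ∏ i, fC c (v j) (u i)) *
        ∏ i ∈ sᶜ, ∏ j ∈ s, fC c (v i) (v j) := by
  have hv_neg (i j : κ) : v i - v j + -c ≠ 0 := fun h => hv j i (by linear_combination -h)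
  rw [KIzBar, KIz_eq_sum hinj hv_neg]
  refine Finset.sum_congr rfl fun s _ => ?_
  simp only [fC_neg]
  rw [Finset.prod_comm (s := Finset.univ), Finset.prod_comm (s := s) (t := sᶜ)]

theorem stmt11_general (hv : ∀ i j, v i - v j + c ≠ 0) (z : ℂ) (u : ι → ℂ)
    (hne : ∀ (j : κ) (k : ι ⊕ κ), k ≠ Sum.inr j → Sum.elim u v k ≠ v j) :
    KIz c z u v =
        ∑ s : Finset κ, (-z) ^ sᶜ.card * (∏ i, ∏ j ∈ s, fC c (u i) (v j)) *
          (∏ i ∈ s, ∏ j ∈ sᶜ, fC c (v i) (v j)) ∧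
      KIzBar c z u v =
        ∑ s : Finset κ, (-z) ^ sᶜ.card * (∏ j ∈ s, ∏ i, fC c (v j) (u i)) *
          (∏ i ∈ sᶜ, ∏ j ∈ s, fC c (v i) (v j)) := by
  have hinj : Function.Injective v := fun i j h =>
    by_contra fun hij => hne j (Sum.inr i) (Sum.inr_injective.ne hij) h
  exact ⟨KIz_eq_sum hinj hv z u, KIzBar_eq_sum hinj hv z u⟩

end Izergin

/-- Partition expansion of the modified Izergin determinant over partitions of `v̄`. -/
theorem stmt11
    (c : ℂ) (hc : c ≠ 0) (z : ℂ) (n m : ℕ)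
    (u : Fin n → ℂ) (v : Fin m → ℂ)
    (hgen : Generic c (Fin.append u v)) :
    KIz c z u v
        = ∑ s : Finset (Fin m),
            (-z) ^ sᶜ.card * (∏ i, ∏ j ∈ s, fC c (u i) (v j)) *
              (∏ i ∈ s, ∏ j ∈ sᶜ, fC c (v i) (v j)) ∧
      KIzBar c z u v
        = ∑ s : Finset (Fin m),
            (-z) ^ sᶜ.card * (∏ j ∈ s, ∏ i, fC c (v j) (u i)) *
              (∏ i ∈ sᶜ, ∏ j ∈ s, fC c (v i) (v j)) := by
  have hw : Generic c (Sum.elim u v) := by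
    rw [← Fin.append_comp_sumElim]
    exact hgen.comp_injective finSumFinEquiv.injective
  exact stmt11_general (fun i j => hw.sub_add_ne_zero hc (.inr i) (.inr j)) z u
    fun _ _ => hw.injective.ne
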